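/- Let U be the number of vertices pruned by Rule 2 in the random unit disk graph G_n. Then there exists a constant C > 0 such that for all sufficiently large n, E(U) ≥ n − C·α_n. -/

import Mathlib

open MeasureTheory Real Set
open scoped ENNReal

noncomputable section

/-- The Euclidean plane ℝ². -/
abbrev Plane := EuclideanSpace ℝ (Fin 2)

/-- The square region `Q = [0, ℓ]²`. -/
def square (ℓ : ℝ) : Set Plane := {p | p 0 ∈ Set.Icc 0 ℓ ∧ p 1 ∈ Set.Icc 0 ℓ}

/-- The uniform probability measure on the square `[0, ℓ]²`. -/
def unifSq (ℓ : ℝ) : Measure Plane := (volume (square ℓ))⁻¹ • volume.restrict (square ℓ)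

/-- The joint law of `n` points `V₁, …, V_n` chosen independently and uniformly at random from
the square `[0, ℓ]²`. -/
def gMeasure (n : ℕ) (ℓ : ℝ) : Measure (Fin n → Plane) := Measure.pi fun _ => unifSq ℓ

/-- The (closed) neighborhood `N(i)` of vertex `i` in the unit disk graph on the points
`ω 0, …, ω (n-1)`: the vertex `i` together with all vertices adjacent to it. -/
def nbhd {n : ℕ} (ω : Fin n → Plane) (i : Fin n) : Set (Fin n) :=
  {j | j = i ∨ (j ≠ i ∧ dist (ω i) (ω j) ≤ 1)}

/-- Vertex `i` is pruned by Rule 2: there are `i₁ > i₂ > i` with `i₁, i₂ ∈ N(i)`, `i₁`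
adjacent to `i₂`, and `N(i) ⊆ N(i₁) ∪ N(i₂)`. (Here vertex IDs are ordered as the indices.) -/
def Pruned {n : ℕ} (ω : Fin n → Plane) (i : Fin n) : Prop :=
  ∃ i₁ i₂ : Fin n, i < i₂ ∧ i₂ < i₁ ∧ i₁ ∈ nbhd ω i ∧ i₂ ∈ nbhd ω i ∧
    dist (ω i₁) (ω i₂) ≤ 1 ∧ nbhd ω i ⊆ nbhd ω i₁ ∪ nbhd ω i₂

/-- `U` is the number of vertices pruned by Rule 2. -/
def U (n : ℕ) (ω : Fin n → Plane) : ℕ := Set.ncard {i : Fin n | Pruned ω i}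

/-!
Among the vertices of larger index than `i`, look for one at a displacement `d` of length of order
`ε` and a second one at a displacement `e` nearly opposite to `d`. Two such vertices are adjacent,
and their unit disks miss only a region of area `O(ε ^ 3)` of the unit disk of `i`: a point `u`
outside both has `1 - ‖u‖ ^ 2 < ‖d‖ ^ 2 - 2 ⟪u, d⟫` and the same for `e`, so it is within `O(ε)` of
the line perpendicular to `d` and within `O(ε ^ 2)` of the unit circle. If this region contains no
vertex, then `i` is pruned.

A single slope would make opposite vertices too rare. Instead, with `ε = h ^ 2`, about `1 / (2 * h)`
separated sectors of width `h` are each required to contain one of `m` later vertices; these offer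
disjoint regions of area `2 * ε ^ 3` to `m` further later vertices. Using disjoint sets of vertices
for the two roles makes the exposure of the randomness sequential. Vertex `i` is hence not pruned
with probability at most `16 h² + h⁻¹ exp (-m h⁵ / (2 l²)) + 3200 n h⁶ / l²` unless fewer than
`2 * m` vertices are later. Taking `m` close to `α` and `h` a small negative power of `α / l²`, the
sum over all `i` is `O(α)`, since `n / α` is smaller than any positive power of `α / l²`.
-/

section ProductMeasure

variable {ι E : Type*} [Fintype ι] [MeasurableSpace E]

/- Condition on the coordinates outside `J`: each section of `S` lies in a box `B ^ J`. -/
theorem measureReal_pi_le_pow (μ : Measure E) [IsProbabilityMeasure μ] {S : Set (ι → E)}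
    (hS : MeasurableSet S) (J : Finset ι) {c : ℝ} (hc : 0 ≤ c)
    (h : ∀ x ∈ S, ∃ B, μ.real B ≤ c ∧ ∀ x' ∈ S, (∀ k ∉ J, x' k = x k) → ∀ j ∈ J, x' j ∈ B) :
    (Measure.pi fun _ => μ).real S ≤ c ^ J.card := by
  classical
  have section_le (x : ι → E) :
      (Measure.pi fun _ : J => μ) (Function.updateFinset x J ⁻¹' S) ≤
        ENNReal.ofReal (c ^ J.card) := by
    obtain hempty | ⟨y, hy⟩ := (Function.updateFinset x J ⁻¹' S).eq_empty_or_nonempty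
    · simp [hempty]
    obtain ⟨B, hBc, hB⟩ := h _ hy
    have hsub : Function.updateFinset x J ⁻¹' S ⊆ univ.pi fun _ => B := fun y' hy' j _ => by
      simpa [Function.updateFinset] using
        hB _ hy' (fun k hk => by simp [Function.updateFinset, hk]) j j.2
    calc (Measure.pi fun _ : J => μ) (Function.updateFinset x J ⁻¹' S)
        ≤ μ B ^ J.card := (measure_mono hsub).trans (by simp [Measure.pi_pi])
      _ ≤ ENNReal.ofReal (c ^ J.card) := by
        rw [ENNReal.ofReal_pow hc]
        gcongr
        exact (ENNReal.le_ofReal_iff_toReal_le (measure_ne_top μ B) hc).2 hBc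
  have hle : ∫⁻ x, S.indicator 1 x ∂(Measure.pi fun _ : ι => μ) ≤
      ∫⁻ _, ENNReal.ofReal (c ^ J.card) ∂(Measure.pi fun _ : ι => μ) := by
    refine lintegral_le_of_lmarginal_le J (measurable_one.indicator hS) measurable_const fun x => ?_
    simp_rw [lmarginal, lintegral_const, measure_univ, mul_one]
    refine le_of_eq_of_le ?_ (section_le x)
    exact lintegral_indicator_one (measurable_updateFinset hS)
  rw [lintegral_indicator_one hS, lintegral_const, measure_univ, mul_one] at hle
  exact ENNReal.toReal_le_of_le_ofReal (pow_nonneg hc _) hle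

theorem measureReal_pi_le_exp_neg (μ : Measure E) [IsProbabilityMeasure μ] {S : Set (ι → E)}
    (hS : MeasurableSet S) (J : Finset ι) {v : ℝ}
    (h : ∀ x ∈ S, ∃ A, MeasurableSet A ∧ v ≤ μ.real A ∧
      ∀ x' ∈ S, (∀ k ∉ J, x' k = x k) → ∀ j ∈ J, x' j ∉ A) :
    (Measure.pi fun _ => μ).real S ≤ exp (-(J.card * v)) := by
  rw [← mul_neg, exp_nat_mul]
  refine measureReal_pi_le_pow μ hS J (exp_pos _).le fun x hx => ?_
  obtain ⟨A, hA, hvA, hxA⟩ := h x hx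
  refine ⟨Aᶜ, ?_, hxA⟩
  rw [probReal_compl_eq_one_sub hA]
  exact (sub_le_sub_left hvA 1).trans (one_sub_le_exp_neg v)

end ProductMeasure

theorem measureReal_biUnion_finset_le_card_mul {ι Ω : Type*} [MeasurableSpace Ω] {μ : Measure Ω}
    {s : Finset ι} {f : ι → Set Ω} {c : ℝ} (h : ∀ i ∈ s, μ.real (f i) ≤ c) :
    μ.real (⋃ i ∈ s, f i) ≤ s.card * c := by
  rw [← nsmul_eq_mul]
  exact (measureReal_biUnion_finset_le s f).trans (Finset.sum_le_card_nsmul s _ c h)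

theorem volume_setOf_forall_mulVec_mem {ι : Type*} [Fintype ι] [DecidableEq ι]
    {M : Matrix ι ι ℝ} (hM : M.det ≠ 0) {s : ι → Set ℝ} (hs : ∀ i, MeasurableSet (s i)) :
    volume {p : EuclideanSpace ℝ ι | ∀ i, M.mulVec p i ∈ s i} =
      ENNReal.ofReal |M.det⁻¹| * ∏ i, volume (s i) := by
  have hpi : MeasurableSet (Matrix.toLin' M ⁻¹' univ.pi s) :=
    (LinearMap.continuous_of_finiteDimensional _).measurable (.univ_pi hs)
  have hpre : {p : EuclideanSpace ℝ ι | ∀ i, M.mulVec p i ∈ s i} =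
      WithLp.ofLp ⁻¹' (Matrix.toLin' M ⁻¹' univ.pi s) := by
    ext p; simp [Matrix.toLin'_apply]
  rw [hpre, (PiLp.volume_preserving_ofLp ι).measure_preimage hpi.nullMeasurableSet,
    Measure.addHaar_preimage_linearMap _ (by rwa [LinearMap.det_toLin']), LinearMap.det_toLin',
    volume_pi, Measure.pi_pi]

/-- The points of the plane whose first coordinate lies in `A` and whose signed vertical distance
from the line of slope `s` through the origin lies in `B`. -/
def obliqueBox (s : ℝ) (A B : Set ℝ) : Set Plane := {p | p 0 ∈ A ∧ p 1 - s * p 0 ∈ B}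

theorem measurableSet_obliqueBox (s : ℝ) {A B : Set ℝ} (hA : MeasurableSet A)
    (hB : MeasurableSet B) : MeasurableSet (obliqueBox s A B) :=
  (hA.preimage (by fun_prop)).inter (hB.preimage (by fun_prop))

theorem volume_obliqueBox (s : ℝ) {A B : Set ℝ} (hA : MeasurableSet A) (hB : MeasurableSet B) :
    volume (obliqueBox s A B) = volume A * volume B := by
  have h := volume_setOf_forall_mulVec_mem (M := !![1, 0; -s, 1]) (s := ![A, B]) (by simp)
    (by simp [Fin.forall_fin_two, hA, hB])
  simpa [obliqueBox, Fin.forall_fin_two, Matrix.mulVec, dotProduct, neg_add_eq_sub] using h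

theorem measureReal_obliqueBox_Icc (s : ℝ) {a b c d : ℝ} (hab : a ≤ b) (hcd : c ≤ d) :
    volume.real (obliqueBox s (Icc a b) (Icc c d)) = (b - a) * (d - c) := by
  rw [measureReal_def, volume_obliqueBox s measurableSet_Icc measurableSet_Icc, Real.volume_Icc,
    Real.volume_Icc, ENNReal.toReal_mul, ENNReal.toReal_ofReal (sub_nonneg.2 hab),
    ENNReal.toReal_ofReal (sub_nonneg.2 hcd)]

theorem volume_obliqueBox_Icc_ne_top (s a b c d : ℝ) :
    volume (obliqueBox s (Icc a b) (Icc c d)) ≠ ⊤ := by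
  rw [volume_obliqueBox s measurableSet_Icc measurableSet_Icc]
  exact ENNReal.mul_ne_top measure_Icc_lt_top.ne measure_Icc_lt_top.ne

theorem volume_setOf_along_across_le (σ : ℝ) {A B : Set ℝ} (hA : MeasurableSet A)
    (hB : MeasurableSet B) :
    volume {p : Plane | p 0 + σ * p 1 ∈ A ∧ p 1 - σ * p 0 ∈ B} ≤ volume A * volume B := by
  have hdet : 1 ≤ 1 + σ * σ := le_add_of_nonneg_right (mul_self_nonneg σ)
  have h := volume_setOf_forall_mulVec_mem (M := !![1, σ; -σ, 1]) (s := ![A, B])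
    (by simpa using (one_pos.trans_le hdet).ne') (by simp [Fin.forall_fin_two, hA, hB])
  have heq : volume {p : Plane | p 0 + σ * p 1 ∈ A ∧ p 1 - σ * p 0 ∈ B} =
      ENNReal.ofReal |(1 + σ * σ)⁻¹| * (volume A * volume B) := by
    simpa [Fin.forall_fin_two, Matrix.mulVec, dotProduct, neg_add_eq_sub] using h
  rw [heq, abs_of_nonneg (by positivity)]
  exact mul_le_of_le_one_left' (ENNReal.ofReal_le_one.2 (inv_le_one_of_one_le₀ hdet))

section Square

variable {l : ℝ}

theorem square_eq_obliqueBox (l : ℝ) : square l = obliqueBox 0 (Icc 0 l) (Icc 0 l) := by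
  simp [square, obliqueBox]

theorem measurableSet_square (l : ℝ) : MeasurableSet (square l) := by
  rw [square_eq_obliqueBox]
  exact measurableSet_obliqueBox 0 measurableSet_Icc measurableSet_Icc

theorem measureReal_square (hl : 0 ≤ l) : volume.real (square l) = l ^ 2 := by
  rw [square_eq_obliqueBox, measureReal_obliqueBox_Icc 0 hl hl]
  ring

theorem volume_square_ne_top (l : ℝ) : volume (square l) ≠ ⊤ := by
  rw [square_eq_obliqueBox]
  exact volume_obliqueBox_Icc_ne_top 0 0 l 0 l

theorem isProbabilityMeasure_unifSq (hl : 0 < l) : IsProbabilityMeasure (unifSq l) := by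
  refine ProbabilityTheory.cond_isProbabilityMeasure_of_finite (fun h => ?_)
    (volume_square_ne_top l)
  simpa [measureReal_def, h, hl.ne', eq_comm (a := (0 : ℝ))] using measureReal_square hl.le

theorem measureReal_unifSq (hl : 0 ≤ l) (A : Set Plane) :
    (unifSq l).real A = volume.real (square l ∩ A) / l ^ 2 := by
  rw [measureReal_def, show unifSq l = ProbabilityTheory.cond volume (square l) from rfl,
    ProbabilityTheory.cond_apply (measurableSet_square l), ENNReal.toReal_mul, ENNReal.toReal_inv,
    ← measureReal_def, ← measureReal_def, measureReal_square hl, div_eq_inv_mul]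

theorem measureReal_unifSq_le (hl : 0 ≤ l) {A : Set Plane} {c : ℝ} (hc : 0 ≤ c)
    (hA : volume A ≤ ENNReal.ofReal c) : (unifSq l).real A ≤ c / l ^ 2 := by
  rw [measureReal_unifSq hl]
  gcongr
  exact ENNReal.toReal_le_of_le_ofReal hc ((measure_mono inter_subset_right).trans hA)

theorem measureReal_unifSq_of_subset (hl : 0 ≤ l) {A : Set Plane} (hA : A ⊆ square l) :
    (unifSq l).real A = volume.real A / l ^ 2 := by
  rw [measureReal_unifSq hl, inter_eq_right.2 hA]

/-- The points of the square `[0, l]²` at distance at least `r` from its boundary. -/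
def innerSquare (l r : ℝ) : Set Plane := obliqueBox 0 (Icc r (l - r)) (Icc r (l - r))

theorem measurableSet_innerSquare (l r : ℝ) : MeasurableSet (innerSquare l r) :=
  measurableSet_obliqueBox 0 measurableSet_Icc measurableSet_Icc

theorem mem_square_of_norm_sub_le {r : ℝ} {v p : Plane} (hv : v ∈ innerSquare l r)
    (hp : ‖p - v‖ ≤ r) : p ∈ square l := by
  have h (k : Fin 2) := abs_le.1 ((PiLp.norm_apply_le (p - v) k).trans hp)
  simp only [PiLp.sub_apply] at h
  simp only [innerSquare, obliqueBox, zero_mul, sub_zero] at hv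
  obtain ⟨⟨h0, h0'⟩, h1, h1'⟩ := hv
  exact ⟨⟨by linarith [h 0], by linarith [h 0]⟩, by linarith [h 1], by linarith [h 1]⟩

theorem measureReal_unifSq_innerSquare_compl_le {r : ℝ} (hl : 0 < l) (hr : 0 ≤ r)
    (hrl : 2 * r ≤ l) : (unifSq l).real (innerSquare l r)ᶜ ≤ 4 * r / l := by
  have := isProbabilityMeasure_unifSq hl
  have hsub : innerSquare l r ⊆ square l := fun p hp =>
    mem_square_of_norm_sub_le hp (by simpa using hr)
  rw [probReal_compl_eq_one_sub (measurableSet_innerSquare l r),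
    measureReal_unifSq_of_subset hl.le hsub, innerSquare,
    measureReal_obliqueBox_Icc 0 (by linarith) (by linarith)]
  calc 1 - (l - r - r) * (l - r - r) / l ^ 2 = 4 * r / l - (2 * r / l) ^ 2 := by
        field_simp; ring
    _ ≤ 4 * r / l := sub_le_self _ (sq_nonneg _)

theorem measureReal_preimage_sub_right (v : Plane) {A : Set Plane} (hA : MeasurableSet A) :
    volume.real ((· - v) ⁻¹' A) = volume.real A :=
  (measurePreserving_sub_right volume v).measureReal_preimage hA.nullMeasurableSet

theorem measureReal_unifSq_preimage_sub {r : ℝ} (hl : 0 ≤ l) {v : Plane}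
    (hv : v ∈ innerSquare l r) {A : Set Plane} (hA : MeasurableSet A)
    (hAr : A ⊆ Metric.closedBall 0 r) :
    (unifSq l).real ((· - v) ⁻¹' A) = volume.real A / l ^ 2 := by
  have hsub : (· - v) ⁻¹' A ⊆ square l := fun p hp =>
    mem_square_of_norm_sub_le hv (mem_closedBall_zero_iff.1 (hAr hp))
  rw [measureReal_unifSq_of_subset hl hsub, measureReal_preimage_sub_right v hA]

end Square

section Covering

variable {ε : ℝ}

/-- The displacements with first coordinate between `ε` and `2 * ε` and slope between `s` and
`t`. -/
def sector (ε s t : ℝ) : Set Plane :=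
  {p | p 0 ∈ Icc ε (2 * ε) ∧ p 1 ∈ Icc (s * p 0) (t * p 0)}

/-- The displacements that are nearly opposite to a displacement of slope `σ` in
`sector ε 0 1`: their vertical distance from the line of slope `σ` is at most `ε ^ 2`. -/
def opposite (ε σ : ℝ) : Set Plane :=
  obliqueBox σ (Icc (-(2 * ε)) (-ε)) (Icc (-ε ^ 2) (ε ^ 2))

/-- The part of the closed unit disk around the origin that is covered neither by the one around
`d` nor by the one around `e`. -/
def uncovered (d e : Plane) : Set Plane :=
  Metric.closedBall 0 1 \ (Metric.closedBall d 1 ∪ Metric.closedBall e 1)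

/-- Two short displacements in nearly opposite directions: two points so displaced from a vertex
cover almost all of its unit disk. -/
def Opposed (ε : ℝ) (d e : Plane) : Prop := d ∈ sector ε 0 1 ∧ e ∈ opposite ε (d 1 / d 0)

theorem mem_uncovered {d e u : Plane} :
    u ∈ uncovered d e ↔ ‖u‖ ≤ 1 ∧ 1 < ‖u - d‖ ∧ 1 < ‖u - e‖ := by
  simp [uncovered, dist_eq_norm]

theorem measurableSet_uncovered (d e : Plane) : MeasurableSet (uncovered d e) :=
  measurableSet_closedBall.diff (measurableSet_closedBall.union measurableSet_closedBall)

theorem measurableSet_sector (ε s t : ℝ) : MeasurableSet (sector ε s t) := by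
  have hIcc := (measurableSet_Icc (a := ε) (b := 2 * ε)).mem
  refine measurableSet_setOfPred.2 (.and (by fun_prop) (.and ?_ ?_)) <;>
    exact measurableSet_setOfPred.1 (measurableSet_le (by fun_prop) (by fun_prop))

theorem measurableSet_opposite (ε σ : ℝ) : MeasurableSet (opposite ε σ) :=
  measurableSet_obliqueBox σ measurableSet_Icc measurableSet_Icc

theorem sector_subset_sector {s t s' t' : ℝ} (hε : 0 ≤ ε) (hs : s' ≤ s) (ht : t ≤ t') :
    sector ε s t ⊆ sector ε s' t' := fun p ⟨h0, h1⟩ => by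
  have : 0 ≤ p 0 := hε.trans h0.1
  exact ⟨h0, (mul_le_mul_of_nonneg_right hs this).trans h1.1,
    h1.2.trans (mul_le_mul_of_nonneg_right ht this)⟩

theorem slope_mem_Icc_of_mem_sector {s t : ℝ} (hε : 0 < ε) {d : Plane} (hd : d ∈ sector ε s t) :
    d 1 / d 0 ∈ Icc s t := by
  have h0 : 0 < d 0 := hε.trans_le hd.1.1
  exact ⟨(le_div_iff₀ h0).2 hd.2.1, (div_le_iff₀ h0).2 hd.2.2⟩

theorem norm_sq_eq (p : Plane) : ‖p‖ ^ 2 = p 0 ^ 2 + p 1 ^ 2 := by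
  rw [EuclideanSpace.real_norm_sq_eq, Fin.sum_univ_two]

theorem norm_sq_le_of_mem_sector (hε : 0 ≤ ε) {d : Plane} (hd : d ∈ sector ε 0 1) :
    ‖d‖ ^ 2 ≤ 8 * ε ^ 2 := by
  obtain ⟨⟨h0, h0'⟩, h1, h1'⟩ := hd
  rw [norm_sq_eq]
  nlinarith

theorem norm_sq_le_of_mem_opposite (hε : 0 ≤ ε) (hε1 : ε ≤ 1) {σ : ℝ} (hσ : σ ∈ Icc 0 1)
    {e : Plane} (he : e ∈ opposite ε σ) : ‖e‖ ^ 2 ≤ 13 * ε ^ 2 := by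
  obtain ⟨⟨h0, h0'⟩, h1, h1'⟩ := he
  have hεε : ε ^ 2 ≤ ε := pow_le_of_le_one hε hε1 two_ne_zero
  have hle : 0 ≤ -e 0 := by linarith
  have hlow : -(3 * ε) ≤ e 1 := by linarith [mul_le_mul_of_nonneg_right hσ.2 hle]
  have hhigh : e 1 ≤ 3 * ε := by linarith [mul_nonneg hσ.1 hle]
  rw [norm_sq_eq]
  nlinarith

theorem norm_le_four_mul_of_norm_sq_le {p : Plane} (hε : 0 ≤ ε) (hp : ‖p‖ ^ 2 ≤ 13 * ε ^ 2) :
    ‖p‖ ≤ 4 * ε :=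
  abs_le_of_sq_le_sq' (by linarith [sq_nonneg ε]) (by positivity) |>.2

theorem sector_subset_closedBall (hε : 0 ≤ ε) :
    sector ε 0 1 ⊆ Metric.closedBall 0 (4 * ε) := fun d hd => by
  have := norm_sq_le_of_mem_sector hε hd
  exact mem_closedBall_zero_iff.2 (norm_le_four_mul_of_norm_sq_le hε (by linarith [sq_nonneg ε]))

theorem opposite_subset_closedBall (hε : 0 ≤ ε) (hε1 : ε ≤ 1) {σ : ℝ} (hσ : σ ∈ Icc 0 1) :
    opposite ε σ ⊆ Metric.closedBall 0 (4 * ε) := fun _ he =>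
  mem_closedBall_zero_iff.2 <|
    norm_le_four_mul_of_norm_sq_le hε (norm_sq_le_of_mem_opposite hε hε1 hσ he)

theorem le_measureReal_sector {s t : ℝ} (hε : 0 ≤ ε) (hs : 0 ≤ s) (hst : s ≤ t) (ht : t ≤ 1) :
    (t - s) * ε ^ 2 ≤ volume.real (sector ε s t) := by
  have hsub : obliqueBox s (Icc ε (2 * ε)) (Icc 0 ((t - s) * ε)) ⊆ sector ε s t := by
    rintro p ⟨h0, h1, h1'⟩
    have := mul_le_mul_of_nonneg_left h0.1 (sub_nonneg.2 hst)
    exact ⟨h0, by linarith, by linarith⟩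
  have hfin : volume (sector ε s t) ≠ ⊤ :=
    ((measure_mono ((sector_subset_sector hε hs ht).trans (sector_subset_closedBall hε))).trans_lt
      measure_closedBall_lt_top).ne
  refine le_of_eq_of_le ?_ (measureReal_mono hsub hfin)
  rw [measureReal_obliqueBox_Icc s (by linarith) (mul_nonneg (sub_nonneg.2 hst) hε)]
  ring

theorem measureReal_opposite (hε : 0 ≤ ε) (σ : ℝ) : volume.real (opposite ε σ) = 2 * ε ^ 3 := by
  rw [opposite, measureReal_obliqueBox_Icc σ (by linarith) (by linarith [sq_nonneg ε])]
  ring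

theorem disjoint_opposite (hε : 0 < ε) {σ τ : ℝ} (hστ : 2 * ε < τ - σ) :
    Disjoint (opposite ε σ) (opposite ε τ) := by
  rw [Set.disjoint_left]
  rintro p ⟨⟨-, h0⟩, h1, -⟩ ⟨-, -, h2⟩
  nlinarith [mul_lt_mul_of_pos_right hστ (show 0 < -p 0 by linarith)]

theorem measureReal_biUnion_opposite (hε : 0 < ε) (M : ℕ) {σ : ℕ → ℝ}
    (hσ : ∀ b < M, ∀ b' < b, 2 * ε < σ b - σ b') :
    volume.real (⋃ b ∈ Finset.range M, opposite ε (σ b)) = M * (2 * ε ^ 3) := by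
  have hdisj : (Finset.range M : Set ℕ).PairwiseDisjoint fun b => opposite ε (σ b) := by
    intro b hb b' hb' hne
    simp only [Finset.coe_range, mem_Iio] at hb hb'
    rcases hne.lt_or_gt with h | h
    · exact disjoint_opposite hε (hσ b' hb' b h)
    · exact (disjoint_opposite hε (hσ b hb b' h)).symm
  rw [measureReal_biUnion_finset hdisj (fun b _ => measurableSet_opposite ε (σ b))
    fun b _ => volume_obliqueBox_Icc_ne_top _ _ _ _ _]
  simp [measureReal_opposite hε.le]

theorem one_sub_norm_sq_lt_of_one_lt_norm_sub {E : Type*} [NormedAddCommGroup E]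
    [InnerProductSpace ℝ E] {u d : E} (h : 1 < ‖u - d‖) :
    1 - ‖u‖ ^ 2 < ‖d‖ ^ 2 - 2 * inner ℝ u d := by
  have : 1 < ‖u - d‖ ^ 2 := one_lt_pow₀ h two_ne_zero
  rw [norm_sub_sq_real] at this
  linarith

theorem plane_inner_eq (u d : Plane) : inner ℝ u d = u 0 * d 0 + u 1 * d 1 := by
  simp [PiLp.inner_apply, Fin.sum_univ_two, mul_comm]

theorem lt_norm_of_mem_uncovered {d e u : Plane} (hd : ‖d‖ ≤ 4 * ε) (hε1 : 8 * ε ≤ 1)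
    (hu : u ∈ uncovered d e) : 4 * ε < ‖u‖ := by
  have := (mem_uncovered.1 hu).2.1.trans_le (norm_sub_le u d)
  linarith

theorem Opposed.norm_left_le (hε : 0 ≤ ε) {d e : Plane} (h : Opposed ε d e) : ‖d‖ ≤ 4 * ε :=
  mem_closedBall_zero_iff.1 (sector_subset_closedBall hε h.1)

theorem Opposed.norm_right_le (hε : 0 < ε) (hε1 : ε ≤ 1) {d e : Plane} (h : Opposed ε d e) :
    ‖e‖ ≤ 4 * ε :=
  mem_closedBall_zero_iff.1 <|
    opposite_subset_closedBall hε.le hε1 (slope_mem_Icc_of_mem_sector hε h.1) h.2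

/- Both `u - d` and `u - e` being long, the nearly opposite `d` and `e` leave `u` nearly
orthogonal to them and close to the unit circle. -/
theorem abs_along_le_of_mem_uncovered (hε : 0 < ε) (hε1 : ε ≤ 1) {d e u : Plane}
    (hde : Opposed ε d e) (hu : u ∈ uncovered d e) :
    |u 0 + d 1 / d 0 * u 1| ≤ 8 * ε ∧ 1 - 15 * ε ^ 2 ≤ ‖u‖ ^ 2 := by
  obtain ⟨hu1, hud, hue⟩ := mem_uncovered.1 hu
  obtain ⟨hd, he⟩ := hde
  have hd0 : 0 < d 0 := hε.trans_le hd.1.1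
  have hd8 := norm_sq_le_of_mem_sector hε.le hd
  have he13 := norm_sq_le_of_mem_opposite hε.le hε1 (slope_mem_Icc_of_mem_sector hε hd) he
  have hdefect : 0 ≤ 1 - ‖u‖ ^ 2 := sub_nonneg.2 (pow_le_one₀ (norm_nonneg u) hu1)
  have hdefect_d := one_sub_norm_sq_lt_of_one_lt_norm_sub hud
  have hdefect_e := one_sub_norm_sq_lt_of_one_lt_norm_sub hue
  have hinner_d : inner ℝ u d = d 0 * (u 0 + d 1 / d 0 * u 1) := by
    rw [plane_inner_eq]; field_simp
  have hinner_e : inner ℝ u e =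
      e 0 * (u 0 + d 1 / d 0 * u 1) + u 1 * (e 1 - d 1 / d 0 * e 0) := by
    rw [plane_inner_eq]; ring
  have hacross_e : |u 1 * (e 1 - d 1 / d 0 * e 0)| ≤ 1 * ε ^ 2 := by
    rw [abs_mul]
    exact mul_le_mul ((PiLp.norm_apply_le u 1).trans hu1) (abs_le.2 he.2) (abs_nonneg _) zero_le_one
  obtain ⟨⟨hdε, -⟩, -⟩ := hd
  obtain ⟨⟨-, heε⟩, -⟩ := he
  have := (abs_le.1 hacross_e).1
  set P := u 0 + d 1 / d 0 * u 1
  refine ⟨abs_le.2 ⟨?_, ?_⟩, ?_⟩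
  · nlinarith
  · nlinarith
  · rcases le_total P 0 with hP | hP <;> nlinarith

theorem mem_Icc_sub_of_sq {r q δ : ℝ} (hr : 1 ≤ r) (hq : 0 ≤ q) (hle : r ^ 2 - δ ≤ q ^ 2)
    (hqr : q ^ 2 ≤ r ^ 2) : q ∈ Icc (r - δ) r := by
  have hqr' : q ≤ r := (sq_le_sq₀ hq (by linarith)).1 hqr
  exact ⟨by nlinarith, hqr'⟩

theorem abs_across_mem_Icc_of_mem_uncovered (hε : 0 < ε) (hε1 : ε ≤ 1) {d e u : Plane}
    (hde : Opposed ε d e) (hu : u ∈ uncovered d e) :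
    |u 1 - d 1 / d 0 * u 0| ∈
      Icc (√(1 + (d 1 / d 0) ^ 2) - 100 * ε ^ 2) √(1 + (d 1 / d 0) ^ 2) := by
  have hu1 : ‖u‖ ^ 2 ≤ 1 := pow_le_one₀ (norm_nonneg u) (mem_uncovered.1 hu).1
  obtain ⟨hP, hu⟩ := abs_along_le_of_mem_uncovered hε hε1 hde hu
  obtain ⟨hσ0, hσ1⟩ := slope_mem_Icc_of_mem_sector hε hde.1
  have hP2 := sq_le_sq' (abs_le.1 hP).1 (abs_le.1 hP).2
  set σ := d 1 / d 0
  have hr : √(1 + σ ^ 2) ^ 2 = 1 + σ ^ 2 := sq_sqrt (by positivity)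
  have hpyth : (u 0 + σ * u 1) ^ 2 + (u 1 - σ * u 0) ^ 2 = (1 + σ ^ 2) * ‖u‖ ^ 2 := by
    rw [norm_sq_eq]; ring
  have hσ2 : σ ^ 2 ≤ 1 := pow_le_one₀ hσ0 hσ1
  refine mem_Icc_sub_of_sq (one_le_sqrt.2 (by linarith [sq_nonneg σ])) (abs_nonneg _) ?_ ?_ <;>
    rw [sq_abs, hr]
  · nlinarith
  · nlinarith

theorem volume_preimage_abs_Icc_le (a b : ℝ) :
    volume (abs ⁻¹' Icc a b) ≤ 2 * ENNReal.ofReal (b - a) := by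
  have hsub : abs ⁻¹' Icc a b ⊆ Icc a b ∪ Icc (-b) (-a) := fun x ⟨ha, hb⟩ => by
    rcases abs_choice x with h | h <;> rw [h] at ha hb
    · exact .inl ⟨ha, hb⟩
    · exact .inr ⟨by linarith, by linarith⟩
  calc volume (abs ⁻¹' Icc a b)
      ≤ volume (Icc a b) + volume (Icc (-b) (-a)) :=
        (measure_mono hsub).trans (measure_union_le _ _)
    _ = 2 * ENNReal.ofReal (b - a) := by
        rw [Real.volume_Icc, Real.volume_Icc, neg_sub_neg, two_mul]

theorem volume_uncovered_le (hε : 0 < ε) (hε1 : ε ≤ 1) {d e : Plane} (hde : Opposed ε d e) :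
    volume (uncovered d e) ≤ ENNReal.ofReal (3200 * ε ^ 3) := by
  set σ := d 1 / d 0
  set r := √(1 + σ ^ 2)
  have hsub : uncovered d e ⊆ {p | p 0 + σ * p 1 ∈ Icc (-(8 * ε)) (8 * ε) ∧
      p 1 - σ * p 0 ∈ abs ⁻¹' Icc (r - 100 * ε ^ 2) r} := fun u hu =>
    ⟨abs_le.1 (abs_along_le_of_mem_uncovered hε hε1 hde hu).1,
      abs_across_mem_Icc_of_mem_uncovered hε hε1 hde hu⟩
  calc volume (uncovered d e)
      ≤ volume (Icc (-(8 * ε)) (8 * ε)) * volume (abs ⁻¹' Icc (r - 100 * ε ^ 2) r) :=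
        (measure_mono hsub).trans <| volume_setOf_along_across_le σ measurableSet_Icc <|
          measurable_abs measurableSet_Icc
    _ ≤ ENNReal.ofReal (16 * ε) * (2 * ENNReal.ofReal (100 * ε ^ 2)) := by
        gcongr
        · rw [Real.volume_Icc]
          exact ENNReal.ofReal_le_ofReal (by linarith)
        · refine (volume_preimage_abs_Icc_le _ _).trans_eq ?_
          rw [sub_sub_cancel]
    _ = ENNReal.ofReal (3200 * ε ^ 3) := by
        rw [← ENNReal.ofReal_ofNat 2, ← ENNReal.ofReal_mul (by norm_num),
          ← ENNReal.ofReal_mul (by positivity)]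
        ring_nf

end Covering

section Pruning

variable {n : ℕ} {ω : Fin n → Plane} {i : Fin n}

theorem mem_nbhd {j : Fin n} : j ∈ nbhd ω i ↔ ‖ω j - ω i‖ ≤ 1 := by
  rw [← dist_eq_norm, dist_comm]
  by_cases h : j = i <;> simp [nbhd, h]

theorem pruned_of_nbhd_subset {j k : Fin n} (hjk : j ≠ k) (hij : i < j) (hik : i < k)
    (hj : j ∈ nbhd ω i) (hk : k ∈ nbhd ω i) (hadj : dist (ω j) (ω k) ≤ 1)
    (hsub : nbhd ω i ⊆ nbhd ω j ∪ nbhd ω k) : Pruned ω i := by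
  rcases hjk.lt_or_gt with h | h
  · exact ⟨k, j, hij, h, hk, hj, dist_comm (ω j) (ω k) ▸ hadj, union_comm _ _ ▸ hsub⟩
  · exact ⟨j, k, hik, h, hj, hk, hadj, hsub⟩

theorem measurableSet_setOf_pruned (i : Fin n) :
    MeasurableSet {ω : Fin n → Plane | Pruned ω i} := by
  refine measurableSet_setOfPred.2 ?_
  simp only [Pruned, nbhd, Set.subset_def, mem_union, mem_ofPred_eq]
  fun_prop

/-- The pairs in `J₁ ×ˢ J₂` whose displacements from vertex `i` are opposed. -/
def opposedPairs (ε : ℝ) (i : Fin n) (J₁ J₂ : Finset (Fin n)) (ω : Fin n → Plane) :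
    Set (Fin n × Fin n) :=
  {q | q.1 ∈ J₁ ∧ q.2 ∈ J₂ ∧ Opposed ε (ω q.1 - ω i) (ω q.2 - ω i)}

variable {ε l : ℝ} {J₁ J₂ : Finset (Fin n)}

theorem pruned_of_mem_opposedPairs (hε : 0 < ε) (hε1 : 8 * ε ≤ 1) (hJ : Disjoint J₁ J₂)
    (hJ₁ : J₁ ⊆ Finset.Ioi i) (hJ₂ : J₂ ⊆ Finset.Ioi i) {q : Fin n × Fin n}
    (hq : q ∈ opposedPairs ε i J₁ J₂ ω)
    (hcov : ∀ j, ω j - ω i ∉ uncovered (ω q.1 - ω i) (ω q.2 - ω i)) : Pruned ω i := by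
  obtain ⟨hq₁, hq₂, hopp⟩ := hq
  have hd := hopp.norm_left_le hε.le
  have he := hopp.norm_right_le hε (by linarith)
  refine pruned_of_nbhd_subset (Finset.disjoint_iff_ne.1 hJ _ hq₁ _ hq₂)
    (Finset.mem_Ioi.1 (hJ₁ hq₁)) (Finset.mem_Ioi.1 (hJ₂ hq₂)) (mem_nbhd.2 (by linarith))
    (mem_nbhd.2 (by linarith)) ?_ fun j hj => ?_
  · rw [dist_eq_norm, ← sub_sub_sub_cancel_right _ _ (ω i)]
    linarith [norm_sub_le (ω q.1 - ω i) (ω q.2 - ω i)]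
  · by_contra hnot
    simp only [mem_union, mem_nbhd, not_or, not_le] at hnot
    refine hcov j (mem_uncovered.2 ⟨mem_nbhd.1 hj, ?_⟩)
    simpa only [sub_sub_sub_cancel_right] using hnot

theorem measurable_mem_opposedPairs (ε : ℝ) (i : Fin n) (J₁ J₂ : Finset (Fin n))
    (q : Fin n × Fin n) : Measurable fun ω => q ∈ opposedPairs ε i J₁ J₂ ω := by
  have hsector := (measurableSet_sector ε 0 1).mem
  have hIcc (a b : ℝ) := (measurableSet_Icc (a := a) (b := b)).mem
  simp only [opposedPairs, Opposed, opposite, obliqueBox, mem_ofPred_eq]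
  fun_prop

theorem measurableSet_setOf_opposedPairs_eq (ε : ℝ) (i : Fin n) (J₁ J₂ : Finset (Fin n))
    (s : Set (Fin n × Fin n)) : MeasurableSet {ω | opposedPairs ε i J₁ J₂ ω = s} := by
  have := measurable_mem_opposedPairs ε i J₁ J₂
  simp only [Set.ext_iff]
  refine measurableSet_setOfPred.2 ?_
  fun_prop

theorem ne_of_mem_opposedPairs (hε : 0 < ε) (hε1 : ε ≤ 1) {q : Fin n × Fin n}
    (hq : q ∈ opposedPairs ε i J₁ J₂ ω) {j : Fin n} (hj : 4 * ε < ‖ω j - ω i‖) :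
    i ≠ j ∧ q.1 ≠ j ∧ q.2 ≠ j := by
  refine ⟨?_, ?_, ?_⟩ <;> rintro rfl <;> refine hj.not_ge ?_
  · simpa using hε.le
  · exact hq.2.2.norm_left_le hε.le
  · exact hq.2.2.norm_right_le hε hε1

theorem opposedPairs_subset_of_eq_off (hε : 0 < ε) (hε1 : ε ≤ 1) {ω' : Fin n → Plane} {j : Fin n}
    (hj : 4 * ε < ‖ω j - ω i‖) (hoff : ∀ k ≠ j, ω' k = ω k) :
    opposedPairs ε i J₁ J₂ ω ⊆ opposedPairs ε i J₁ J₂ ω' := fun q hq => by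
  obtain ⟨hi, hq₁, hq₂⟩ := ne_of_mem_opposedPairs hε hε1 hq hj
  refine ⟨hq.1, hq.2.1, ?_⟩
  rw [hoff _ hi, hoff _ hq₁, hoff _ hq₂]
  exact hq.2.2

/-- The configurations in which vertex `j` is a neighbor of vertex `i` that is not covered by the
chosen pair of opposed vertices. -/
def exposed (ε : ℝ) (i : Fin n) (J₁ J₂ : Finset (Fin n)) (j : Fin n) : Set (Fin n → Plane) :=
  {ω | ∃ h : (opposedPairs ε i J₁ J₂ ω).Nonempty,
    ω j - ω i ∈ uncovered (ω h.some.1 - ω i) (ω h.some.2 - ω i)}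

theorem measurableSet_exposed (ε : ℝ) (i : Fin n) (J₁ J₂ : Finset (Fin n)) (j : Fin n) :
    MeasurableSet (exposed ε i J₁ J₂ j) := by
  have hunion : exposed ε i J₁ J₂ j = ⋃ (s : Set (Fin n × Fin n)) (h : s.Nonempty),
      {ω | opposedPairs ε i J₁ J₂ ω = s} ∩
        {ω | ω j - ω i ∈ uncovered (ω h.some.1 - ω i) (ω h.some.2 - ω i)} := by
    ext ω
    simp [exposed]
  rw [hunion]
  refine .iUnion fun s => .iUnion fun h =>
    (measurableSet_setOf_opposedPairs_eq ε i J₁ J₂ s).inter ?_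
  simp only [mem_uncovered]
  refine measurableSet_setOfPred.2 (.and ?_ (.and ?_ ?_)) <;> refine measurableSet_setOfPred.1 ?_
  · exact measurableSet_le (by fun_prop) measurable_const
  all_goals exact measurableSet_lt measurable_const (by fun_prop)

theorem lt_norm_of_mem_exposed (hε : 0 < ε) (hε1 : 8 * ε ≤ 1) {j : Fin n}
    (hω : ω ∈ exposed ε i J₁ J₂ j) : 4 * ε < ‖ω j - ω i‖ := by
  obtain ⟨hne, hj⟩ := hω
  exact lt_norm_of_mem_uncovered (hne.some_mem.2.2.norm_left_le hε.le) hε1 hj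

/- Only vertices closer than `4 * ε` matter for the choice of the pair, so moving an exposed
vertex `j` does not change the pair. -/
theorem mem_uncovered_of_mem_exposed (hε : 0 < ε) (hε1 : 8 * ε ≤ 1) {ω' : Fin n → Plane}
    {j : Fin n} (hω : ω ∈ exposed ε i J₁ J₂ j) (hω' : ω' ∈ exposed ε i J₁ J₂ j)
    (hoff : ∀ k ≠ j, ω' k = ω k) :
    ω' j - ω i ∈ uncovered (ω hω.1.some.1 - ω i) (ω hω.1.some.2 - ω i) := by
  have hfar := lt_norm_of_mem_exposed hε hε1 hω
  have hfar' := lt_norm_of_mem_exposed hε hε1 hω'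
  have hpairs : opposedPairs ε i J₁ J₂ ω' = opposedPairs ε i J₁ J₂ ω :=
    (opposedPairs_subset_of_eq_off hε (by linarith) hfar' fun k hk => (hoff k hk).symm).antisymm
      (opposedPairs_subset_of_eq_off hε (by linarith) hfar hoff)
  obtain ⟨hne, hj⟩ := hω
  obtain ⟨hne', hj'⟩ := hω'
  obtain ⟨hi, hne₁, hne₂⟩ := ne_of_mem_opposedPairs hε (by linarith) hne.some_mem hfar
  have hsome : hne'.some = hne.some := by congr 1
  rw [hsome, hoff _ hi, hoff _ hne₁, hoff _ hne₂] at hj'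
  exact hj'

theorem measureReal_gMeasure_exposed_le (hl : 0 < l) (hε : 0 < ε) (hε1 : 8 * ε ≤ 1) (j : Fin n) :
    (gMeasure n l).real (exposed ε i J₁ J₂ j) ≤ 3200 * ε ^ 3 / l ^ 2 := by
  have := isProbabilityMeasure_unifSq hl
  rw [← pow_one (3200 * ε ^ 3 / l ^ 2), ← Finset.card_singleton j]
  refine measureReal_pi_le_pow _ (measurableSet_exposed ε i J₁ J₂ j) {j} (by positivity)
    fun ω hω => ⟨(· - ω i) ⁻¹' uncovered (ω hω.1.some.1 - ω i) (ω hω.1.some.2 - ω i), ?_, ?_⟩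
  · refine measureReal_unifSq_le hl.le (by positivity) ?_
    rw [(measurePreserving_sub_right volume (ω i)).measure_preimage
      (measurableSet_uncovered _ _).nullMeasurableSet]
    exact volume_uncovered_le hε (by linarith) hω.1.some_mem.2.2
  · intro ω' hω' hoff k hk
    rw [Finset.mem_singleton.1 hk]
    exact mem_uncovered_of_mem_exposed hε hε1 hω hω' fun k hk => hoff k (by simpa using hk)

theorem measureReal_gMeasure_setOf_notMem_innerSquare_le {r : ℝ} (hl : 0 < l) (hr : 0 ≤ r)
    (hrl : 2 * r ≤ l) (i : Fin n) :
    (gMeasure n l).real {ω | ω i ∉ innerSquare l r} ≤ 4 * r / l := by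
  have := isProbabilityMeasure_unifSq hl
  refine le_of_eq_of_le ?_ (measureReal_unifSq_innerSquare_compl_le hl hr hrl)
  exact (measurePreserving_eval (fun _ => unifSq l) i).measureReal_preimage
    (measurableSet_innerSquare l r).compl.nullMeasurableSet

theorem measureReal_gMeasure_le_exp_neg {r v : ℝ} (hl : 0 < l) {S : Set (Fin n → Plane)}
    (hS : MeasurableSet S) {J : Finset (Fin n)} (hi : i ∉ J)
    (hinner : ∀ ω ∈ S, ω i ∈ innerSquare l r)
    (h : ∀ ω ∈ S, ∃ A, MeasurableSet A ∧ A ⊆ Metric.closedBall 0 r ∧ v ≤ volume.real A ∧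
      ∀ ω' ∈ S, (∀ k ∉ J, ω' k = ω k) → ∀ j ∈ J, ω' j - ω' i ∉ A) :
    (gMeasure n l).real S ≤ exp (-(J.card * (v / l ^ 2))) := by
  have := isProbabilityMeasure_unifSq hl
  refine measureReal_pi_le_exp_neg _ hS J fun ω hω => ?_
  obtain ⟨A, hA, hAr, hvA, hmiss⟩ := h ω hω
  refine ⟨(· - ω i) ⁻¹' A, hA.preimage (by fun_prop), ?_, fun ω' hω' hoff j hj => ?_⟩
  · rw [measureReal_unifSq_preimage_sub hl.le (hinner ω hω) hA hAr]
    gcongr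
  · rw [mem_preimage, ← hoff i hi]
    exact hmiss ω' hω' hoff j hj

/-- The configurations in which no vertex of `J` lies in the sector with slopes between `s` and
`t` at vertex `i`, although vertex `i` is not close to the boundary. -/
def missingSector (l ε : ℝ) (i : Fin n) (J : Finset (Fin n)) (s t : ℝ) : Set (Fin n → Plane) :=
  {ω | ω i ∈ innerSquare l (4 * ε) ∧ ∀ j ∈ J, ω j - ω i ∉ sector ε s t}

theorem measureReal_gMeasure_missingSector_le (hl : 0 < l) (hε : 0 ≤ ε) {J : Finset (Fin n)}
    (hi : i ∉ J) {s t : ℝ} (hs : 0 ≤ s) (hst : s ≤ t) (ht : t ≤ 1) :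
    (gMeasure n l).real (missingSector l ε i J s t) ≤
      exp (-(J.card * ((t - s) * ε ^ 2 / l ^ 2))) := by
  have hmeas : MeasurableSet (missingSector l ε i J s t) := by
    have hinner := (measurableSet_innerSquare l (4 * ε)).mem
    have hsector := (measurableSet_sector ε s t).mem
    exact measurableSet_setOfPred.2 (by fun_prop)
  exact measureReal_gMeasure_le_exp_neg hl hmeas hi (fun ω hω => hω.1) fun _ _ =>
    ⟨sector ε s t, measurableSet_sector ε s t,
      (sector_subset_sector hε hs ht).trans (sector_subset_closedBall hε),
      le_measureReal_sector hε hs hst ht, fun ω' hω' _ => hω'.2⟩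

/-- The configurations in which each of the `M` sectors with slopes between `2 * h * b` and
`2 * h * b + h` at vertex `i` contains a vertex of `J₁`, but no vertex of `J₂` is opposed to a
vertex of `J₁`, although vertex `i` is not close to the boundary. -/
def missingOpposite (l ε : ℝ) (i : Fin n) (J₁ J₂ : Finset (Fin n)) (h : ℝ) (M : ℕ) :
    Set (Fin n → Plane) :=
  {ω | ω i ∈ innerSquare l (4 * ε) ∧
    (∀ b < M, ∃ j ∈ J₁, ω j - ω i ∈ sector ε (2 * h * b) (2 * h * b + h)) ∧
    opposedPairs ε i J₁ J₂ ω = ∅}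

theorem measurableSet_missingOpposite (l ε : ℝ) (i : Fin n) (J₁ J₂ : Finset (Fin n)) (h : ℝ)
    (M : ℕ) : MeasurableSet (missingOpposite l ε i J₁ J₂ h M) := by
  have hinner := (measurableSet_innerSquare l (4 * ε)).mem
  have hsector (s t : ℝ) := (measurableSet_sector ε s t).mem
  have hempty := measurableSet_setOfPred.1 (measurableSet_setOf_opposedPairs_eq ε i J₁ J₂ ∅)
  exact measurableSet_setOfPred.2 (by fun_prop)

/- The vertices of `J₁` in the sectors offer `M` disjoint regions to the vertices of `J₂`. -/
theorem measureReal_gMeasure_missingOpposite_le (hl : 0 < l) (hε : 0 < ε) (hε1 : ε ≤ 1)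
    (hi : i ∉ J₂) (hJ : Disjoint J₁ J₂) {h : ℝ} (hh : 2 * ε < h) {M : ℕ} (hM : 2 * h * M ≤ 1) :
    (gMeasure n l).real (missingOpposite l ε i J₁ J₂ h M) ≤
      exp (-(J₂.card * (M * (2 * ε ^ 3) / l ^ 2))) := by
  refine measureReal_gMeasure_le_exp_neg hl (measurableSet_missingOpposite l ε i J₁ J₂ h M) hi
    (fun ω hω => hω.1) fun ω hω => ?_
  have : Nonempty (Fin n) := ⟨i⟩
  choose! j hjJ₁ hj using hω.2.1
  set σ : ℕ → ℝ := fun b => (ω (j b) - ω i) 1 / (ω (j b) - ω i) 0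
  have hσ (b : ℕ) (hb : b < M) : σ b ∈ Icc (2 * h * b) (2 * h * b + h) :=
    slope_mem_Icc_of_mem_sector hε (hj b hb)
  have hle_one (b : ℕ) (hb : b < M) : 2 * h * b + h ≤ 1 := by
    have : (b : ℝ) + 1 ≤ M := by exact_mod_cast hb
    nlinarith
  have hh0 : 0 < h := by linarith
  have hnonneg (b : ℕ) : 0 ≤ 2 * h * b := by positivity
  have hgap (b : ℕ) (hb : b < M) (b' : ℕ) (hb' : b' < b) : 2 * ε < σ b - σ b' := by
    have : (b' : ℝ) + 1 ≤ b := by exact_mod_cast hb'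
    nlinarith [(hσ b hb).1, (hσ b' (hb'.trans hb)).2]
  refine ⟨⋃ b ∈ Finset.range M, opposite ε (σ b), ?_, ?_, ?_, ?_⟩
  · exact Finset.measurableSet_biUnion _ fun b _ => measurableSet_opposite ε (σ b)
  · refine iUnion₂_subset fun b hb => opposite_subset_closedBall hε.le hε1 ?_
    have hb := Finset.mem_range.1 hb
    exact ⟨(hnonneg b).trans (hσ b hb).1, (hσ b hb).2.trans (hle_one b hb)⟩
  · exact (measureReal_biUnion_opposite hε M hgap).ge
  · intro ω' hω' hoff k hk hmem
    obtain ⟨b, hb, hkb⟩ : ∃ b < M, ω' k - ω' i ∈ opposite ε (σ b) := by simpa using hmem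
    have hjb : ω' (j b) = ω (j b) := hoff _ (Finset.disjoint_left.1 hJ (hjJ₁ b hb))
    have hpair : (j b, k) ∈ opposedPairs ε i J₁ J₂ ω' := by
      refine ⟨hjJ₁ b hb, hk, ?_⟩
      rw [hjb, hoff i hi] at *
      exact ⟨sector_subset_sector hε.le (hnonneg b) (hle_one b hb) (hj b hb), hkb⟩
    exact notMem_empty _ (hω'.2.2 ▸ hpair)

theorem pruned_of_notMem {h : ℝ} {M : ℕ} (hε : 0 < ε) (hε1 : 8 * ε ≤ 1) (hJ : Disjoint J₁ J₂)
    (hJ₁ : J₁ ⊆ Finset.Ioi i) (hJ₂ : J₂ ⊆ Finset.Ioi i) (hinner : ω i ∈ innerSquare l (4 * ε))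
    (hsector : ∀ b < M, ω ∉ missingSector l ε i J₁ (2 * h * b) (2 * h * b + h))
    (hopposite : ω ∉ missingOpposite l ε i J₁ J₂ h M)
    (hexposed : ∀ j, ω ∉ exposed ε i J₁ J₂ j) : Pruned ω i := by
  have hhit : ∀ b < M, ∃ j ∈ J₁, ω j - ω i ∈ sector ε (2 * h * b) (2 * h * b + h) :=
    fun b hb => by simpa [missingSector, hinner] using hsector b hb
  have hne : (opposedPairs ε i J₁ J₂ ω).Nonempty :=
    nonempty_iff_ne_empty.2 fun hempty => hopposite ⟨hinner, hhit, hempty⟩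
  exact pruned_of_mem_opposedPairs hε hε1 hJ hJ₁ hJ₂ hne.some_mem fun j hj => hexposed j ⟨hne, hj⟩

theorem setOf_not_pruned_subset (l h : ℝ) (M : ℕ) (hε : 0 < ε) (hε1 : 8 * ε ≤ 1)
    (hJ : Disjoint J₁ J₂) (hJ₁ : J₁ ⊆ Finset.Ioi i) (hJ₂ : J₂ ⊆ Finset.Ioi i) :
    {ω | ¬Pruned ω i} ⊆ {ω | ω i ∉ innerSquare l (4 * ε)} ∪
      (⋃ b ∈ Finset.range M, missingSector l ε i J₁ (2 * h * b) (2 * h * b + h)) ∪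
      missingOpposite l ε i J₁ J₂ h M ∪ ⋃ j ∈ Finset.univ, exposed ε i J₁ J₂ j := by
  intro ω hω
  contrapose! hω
  simp only [mem_union, not_or, mem_iUnion, not_exists, Finset.mem_range, Finset.mem_univ,
    true_imp_iff, mem_ofPred_eq, not_not] at hω ⊢
  obtain ⟨⟨⟨hinner, hsector⟩, hopposite⟩, hexposed⟩ := hω
  exact pruned_of_notMem hε hε1 hJ hJ₁ hJ₂ hinner hsector hopposite hexposed

theorem measureReal_gMeasure_setOf_not_pruned_le_add {h : ℝ} {M m : ℕ} (hl : 1 ≤ l) (hε : 0 < ε)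
    (hε1 : 8 * ε ≤ 1) (hJ : Disjoint J₁ J₂) (hJ₁ : J₁ ⊆ Finset.Ioi i) (hJ₂ : J₂ ⊆ Finset.Ioi i)
    (hm₁ : J₁.card = m) (hm₂ : J₂.card = m) (hh : 2 * ε < h) (hM : 2 * h * M ≤ 1) :
    (gMeasure n l).real {ω | ¬Pruned ω i} ≤
      4 * (4 * ε) / l + M * exp (-(m * (h * ε ^ 2 / l ^ 2))) +
        exp (-(m * (M * (2 * ε ^ 3) / l ^ 2))) + n * (3200 * ε ^ 3 / l ^ 2) := by
  have hl0 : 0 < l := by linarith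
  have := isProbabilityMeasure_unifSq hl0
  have : IsProbabilityMeasure (gMeasure n l) := Measure.pi.instIsProbabilityMeasure _
  have hi₁ : i ∉ J₁ := fun h => lt_irrefl i (Finset.mem_Ioi.1 (hJ₁ h))
  have hi₂ : i ∉ J₂ := fun h => lt_irrefl i (Finset.mem_Ioi.1 (hJ₂ h))
  have hh0 : 0 < h := by linarith
  refine (measureReal_mono (setOf_not_pruned_subset l h M hε hε1 hJ hJ₁ hJ₂)).trans ?_
  refine (measureReal_union_le _ _).trans <| add_le_add ((measureReal_union_le _ _).trans <|
    add_le_add ((measureReal_union_le _ _).trans <| add_le_add ?_ ?_) ?_) ?_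
  · exact measureReal_gMeasure_setOf_notMem_innerSquare_le hl0 (by positivity) (by linarith) i
  · refine (measureReal_biUnion_finset_le_card_mul fun b hb => ?_).trans_eq (by
      rw [Finset.card_range])
    have hb1 : (b : ℝ) + 1 ≤ M := by exact_mod_cast Finset.mem_range.1 hb
    refine (measureReal_gMeasure_missingSector_le hl0 hε.le hi₁ (by positivity) (by linarith)
      (by nlinarith)).trans_eq ?_
    rw [hm₁, add_sub_cancel_left]
  · exact hm₂ ▸ measureReal_gMeasure_missingOpposite_le hl0 hε (by linarith) hi₂ hJ hh hM
  · refine (measureReal_biUnion_finset_le_card_mul fun j _ => ?_).trans_eq (by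
      rw [Finset.card_fin])
    exact measureReal_gMeasure_exposed_le hl0 hε hε1 j

theorem exists_nat_mul_le_one_and_one_le_mul {h : ℝ} (hh : 0 < h) (hh1 : h ≤ 1 / 4) :
    ∃ M : ℕ, 2 * h * M ≤ 1 ∧ 1 ≤ 4 * h * M := by
  refine ⟨⌊1 / (2 * h)⌋₊, ?_, ?_⟩
  · have := Nat.floor_le (show 0 ≤ 1 / (2 * h) by positivity)
    rwa [le_div_iff₀' (by positivity)] at this
  · have := Nat.lt_floor_add_one (1 / (2 * h))
    rw [div_lt_iff₀' (by positivity)] at this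
    linarith

theorem measureReal_gMeasure_setOf_not_pruned_le {h : ℝ} {m : ℕ} (hl : 1 ≤ l) (hh : 0 < h)
    (hh1 : h ≤ 1 / 4) (hm : 2 * m ≤ (Finset.Ioi i).card) :
    (gMeasure n l).real {ω | ¬Pruned ω i} ≤
      16 * h ^ 2 + h⁻¹ * exp (-(m * h ^ 5 / (2 * l ^ 2))) + n * (3200 * h ^ 6 / l ^ 2) := by
  have hl0 : 0 < l := by linarith
  obtain ⟨J, hJ, hJcard⟩ := Finset.exists_subset_card_eq hm
  obtain ⟨J₁, hJ₁, hJ₁card⟩ := Finset.exists_subset_card_eq (show m ≤ J.card by lia)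
  obtain ⟨M, hM, hM'⟩ := exists_nat_mul_le_one_and_one_le_mul hh hh1
  have hJ₂card : (J \ J₁).card = m := by rw [Finset.card_sdiff_of_subset hJ₁]; lia
  set x := m * h ^ 5 / l ^ 2
  have hx : 0 ≤ x := by positivity
  have hhalf : m * h ^ 5 / (2 * l ^ 2) = x / 2 := by simp only [x]; ring
  have hboundary : 4 * (4 * h ^ 2) / l ≤ 16 * h ^ 2 := by
    rw [div_le_iff₀ hl0]; nlinarith [sq_nonneg h]
  have hsector : m * (h * (h ^ 2) ^ 2 / l ^ 2) = x := by simp only [x]; ring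
  have hopposite : x / 2 ≤ m * (M * (2 * (h ^ 2) ^ 3) / l ^ 2) := by
    calc x / 2 ≤ x / 2 * (4 * h * M) := le_mul_of_one_le_right (by positivity) hM'
      _ = _ := by simp only [x]; ring
  have hMh : (M : ℝ) + 1 ≤ h⁻¹ := by
    rw [← one_div, le_div_iff₀ hh]; linarith
  have := measureReal_gMeasure_setOf_not_pruned_le_add hl (by positivity : 0 < h ^ 2)
    (by nlinarith) Finset.disjoint_sdiff (hJ₁.trans hJ) (Finset.sdiff_subset.trans hJ) hJ₁card
    hJ₂card (by nlinarith) hM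
  rw [hsector] at this
  calc (gMeasure n l).real {ω | ¬Pruned ω i}
      ≤ 4 * (4 * h ^ 2) / l + M * exp (-x) + exp (-(m * (M * (2 * (h ^ 2) ^ 3) / l ^ 2))) +
          n * (3200 * (h ^ 2) ^ 3 / l ^ 2) := this
    _ ≤ 16 * h ^ 2 + M * exp (-(x / 2)) + exp (-(x / 2)) +
          n * (3200 * (h ^ 2) ^ 3 / l ^ 2) := by gcongr; linarith
    _ = 16 * h ^ 2 + (M + 1) * exp (-(x / 2)) + n * (3200 * h ^ 6 / l ^ 2) := by ring
    _ ≤ 16 * h ^ 2 + h⁻¹ * exp (-(m * h ^ 5 / (2 * l ^ 2))) + n * (3200 * h ^ 6 / l ^ 2) := by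
        rw [hhalf]
        gcongr

end Pruning

section Expectation

theorem integral_ncard {ι Ω : Type*} [Fintype ι] [MeasurableSpace Ω] {μ : Measure Ω}
    [IsFiniteMeasure μ] {A : ι → Set Ω} (hA : ∀ i, MeasurableSet (A i)) :
    ∫ ω, ({i | ω ∈ A i}.ncard : ℝ) ∂μ = ∑ i, μ.real (A i) := by
  classical
  have hsum (ω : Ω) : ({i | ω ∈ A i}.ncard : ℝ) = ∑ i, (A i).indicator (fun _ => (1 : ℝ)) ω := by
    simp [Set.ncard_eq_toFinset_card', Set.indicator_apply]
  simp_rw [hsum]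
  rw [integral_finsetSum _ fun i _ => (integrable_const (1 : ℝ)).indicator (hA i)]
  exact Finset.sum_congr rfl fun i _ => integral_indicator_one (hA i)

theorem card_filter_card_Ioi_lt_le (n k : ℕ) :
    (Finset.univ.filter fun i : Fin n => (Finset.Ioi i).card < k).card ≤ k := by
  calc (Finset.univ.filter fun i : Fin n => (Finset.Ioi i).card < k).card
      ≤ (Finset.range k).card := by
        refine Finset.card_le_card_of_injOn (fun i => (Finset.Ioi i).card) (fun i hi => ?_)
          fun i _ j _ hij => ?_
        · simpa using hi
        · simp only [Fin.card_Ioi] at hij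
          lia
    _ = k := Finset.card_range k

variable {n m : ℕ} {l : ℝ}

theorem sub_le_integral_U {p : ℝ} (hl : 0 < l) (hp : 0 ≤ p)
    (h : ∀ i : Fin n, m ≤ (Finset.Ioi i).card → (gMeasure n l).real {ω | ¬Pruned ω i} ≤ p) :
    n - (m + n * p) ≤ ∫ ω, (U n ω : ℝ) ∂gMeasure n l := by
  classical
  have := isProbabilityMeasure_unifSq hl
  have : IsProbabilityMeasure (gMeasure n l) := Measure.pi.instIsProbabilityMeasure _
  have hcompl (i : Fin n) : (gMeasure n l).real {ω | Pruned ω i} =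
      1 - (gMeasure n l).real {ω | ¬Pruned ω i} :=
    eq_sub_of_add_eq (probReal_add_probReal_compl (measurableSet_setOf_pruned i))
  have hle (i : Fin n) : (gMeasure n l).real {ω | ¬Pruned ω i} ≤
      (if (Finset.Ioi i).card < m then 1 else 0) + p := by
    split_ifs with hi
    · linarith [measureReal_le_one (μ := gMeasure n l) (s := {ω | ¬Pruned ω i})]
    · linarith [h i (not_lt.1 hi)]
  have hsum : ∑ i, (gMeasure n l).real {ω | ¬Pruned ω i} ≤ m + n * p := by
    refine (Finset.sum_le_sum fun i _ => hle i).trans ?_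
    have hcard : ((Finset.univ.filter fun i : Fin n => (Finset.Ioi i).card < m).card : ℝ) ≤ m := by
      exact_mod_cast card_filter_card_Ioi_lt_le n m
    simpa [Finset.sum_add_distrib] using hcard
  calc (n : ℝ) - (m + n * p)
      ≤ n - ∑ i, (gMeasure n l).real {ω | ¬Pruned ω i} := by gcongr
    _ = ∑ i, (gMeasure n l).real {ω | Pruned ω i} := by simp [hcompl]
    _ = ∫ ω, (U n ω : ℝ) ∂gMeasure n l := (integral_ncard measurableSet_setOf_pruned).symm

end Expectation

section Asymptotics

open Filter Topology

theorem tendsto_rpow_mul_exp_neg_mul_rpow_atTop (a : ℝ) {b c : ℝ} (hb : 0 < b) (hc : 0 < c) :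
    Tendsto (fun x : ℝ => x ^ a * exp (-c * x ^ b)) atTop (𝓝 0) := by
  refine ((tendsto_rpow_mul_exp_neg_mul_atTop_nhds_zero (a / b) c hc).comp
    (tendsto_rpow_atTop hb)).congr' ?_
  filter_upwards [eventually_ge_atTop 0] with x hx
  simp only [Function.comp_apply]
  rw [← rpow_mul hx, mul_div_cancel₀ _ hb.ne']

theorem eventually_log_rpow_le_mul_rpow (p : ℝ) {κ c : ℝ} (hκ : 0 < κ) (hc : 0 < c) :
    ∀ᶠ x : ℝ in atTop, log x ^ p ≤ c * x ^ κ := by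
  filter_upwards [(isLittleO_log_rpow_rpow_atTop p hκ).bound hc, eventually_ge_atTop 1]
    with x hx hx1
  rwa [norm_of_nonneg (rpow_nonneg (log_nonneg hx1) p), norm_of_nonneg (by positivity)] at hx

theorem eventually_le_mul_rpow_of_div_log_rpow_lt {α ξ : ℕ → ℝ} {c p κ : ℝ} (hc : 0 < c)
    (hκ : 0 < κ) (hξ : Tendsto ξ atTop atTop)
    (h : ∀ᶠ n : ℕ in atTop, c * n / log (ξ n) ^ p < α n) :
    ∀ᶠ n : ℕ in atTop, n ≤ α n * ξ n ^ κ := by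
  filter_upwards [h, hξ.eventually (eventually_log_rpow_le_mul_rpow p hκ hc),
    hξ.eventually_gt_atTop 1] with n hn hlog hξn
  have hpos : 0 < log (ξ n) ^ p := rpow_pos_of_pos (log_pos hξn) p
  have hα : 0 ≤ α n := le_trans (by positivity) hn.le
  rw [div_lt_iff₀ hpos] at hn
  have := mul_le_mul_of_nonneg_left hlog hα
  exact le_of_mul_le_mul_left (by linarith) hc

theorem rpow_mul_rpow_pow {x : ℝ} (hx : 0 < x) (a b : ℝ) (k : ℕ) :
    x ^ a * (x ^ b) ^ k = x ^ (a + b * k) := by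
  rw [← rpow_mul_natCast hx.le, ← rpow_add hx]

theorem mul_inv_mul_exp_neg_le {N l m α x κ h : ℝ} (hl : 0 < l) (hα : α = x * l ^ 2)
    (hx : 0 < x) (hN : N ≤ α * x ^ κ) (hm : α ≤ m) (hh : h = x ^ (-(1 + 2 * κ) / 6))
    (hexp : x ^ (κ + (1 + 2 * κ) / 6) * exp (-(1 / 2) * x ^ ((1 - 10 * κ) / 6)) ≤ 1) :
    N * (h⁻¹ * exp (-(m * h ^ 5 / (2 * l ^ 2)))) ≤ α := by
  have hα0 : 0 < α := hα ▸ by positivity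
  have hh0 : 0 < h := hh ▸ rpow_pos_of_pos hx _
  have hinv : h⁻¹ = x ^ ((1 + 2 * κ) / 6) := by rw [hh, ← rpow_neg hx.le, neg_div, neg_neg]
  have hpow : x * h ^ 5 = x ^ ((1 - 10 * κ) / 6) := by
    have := rpow_mul_rpow_pow hx 1 (-(1 + 2 * κ) / 6) 5
    rw [rpow_one, ← hh] at this
    rw [this]
    ring_nf
  have hexponent : 1 / 2 * x ^ ((1 - 10 * κ) / 6) ≤ m * h ^ 5 / (2 * l ^ 2) := by
    calc 1 / 2 * x ^ ((1 - 10 * κ) / 6) = α * h ^ 5 / (2 * l ^ 2) := by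
          rw [← hpow, hα]; field_simp
      _ ≤ m * h ^ 5 / (2 * l ^ 2) := by gcongr
  calc N * (h⁻¹ * exp (-(m * h ^ 5 / (2 * l ^ 2))))
      ≤ α * x ^ κ * (h⁻¹ * exp (-(1 / 2 * x ^ ((1 - 10 * κ) / 6)))) := by gcongr
    _ = α * (x ^ (κ + (1 + 2 * κ) / 6) * exp (-(1 / 2) * x ^ ((1 - 10 * κ) / 6))) := by
        rw [hinv, rpow_add hx, neg_mul]; ring
    _ ≤ α := mul_le_of_le_one_right hα0.le hexp

/- The choice `h = x ^ (-(1 + 2 * κ) / 6)` makes the expected number of pairs of a vertex and an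
exposed neighbor at most of order `α`. -/
theorem sub_mul_le_integral_U {n : ℕ} {l α x κ : ℝ} (hl : 1 ≤ l) (hα : α = x * l ^ 2) (hx : 1 ≤ x)
    (hκ : κ ≤ 1) (hn : n ≤ α * x ^ κ) (hh : x ^ (-(1 + 2 * κ) / 6) ≤ 1 / 4)
    (hexp : x ^ (κ + (1 + 2 * κ) / 6) * exp (-(1 / 2) * x ^ ((1 - 10 * κ) / 6)) ≤ 1) :
    n - 3221 * α ≤ ∫ ω, (U n ω : ℝ) ∂gMeasure n l := by
  have hl0 : 0 < l := one_pos.trans_le hl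
  have hx0 : 0 < x := one_pos.trans_le hx
  have hα1 : 1 ≤ α := hα ▸ one_le_mul_of_one_le_of_one_le hx (one_le_pow₀ hl)
  set h := x ^ (-(1 + 2 * κ) / 6) with hdef
  have hh0 : 0 < h := rpow_pos_of_pos hx0 _
  have hboundary : n * (16 * h ^ 2) ≤ 16 * α := by
    calc n * (16 * h ^ 2) ≤ α * x ^ κ * (16 * h ^ 2) := by gcongr
      _ = 16 * α * x ^ (κ + -(1 + 2 * κ) / 6 * (2 : ℕ)) := by
        rw [← rpow_mul_rpow_pow hx0]; ring
      _ ≤ 16 * α := mul_le_of_le_one_right (by positivity) <|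
        rpow_le_one_of_one_le_of_nonpos hx (by push_cast; linarith)
  have hmissing := mul_inv_mul_exp_neg_le hl0 hα hx0 hn (Nat.le_ceil α) hdef hexp
  have hexposed : n * (n * (3200 * h ^ 6 / l ^ 2)) ≤ 3200 * α := by
    calc n * (n * (3200 * h ^ 6 / l ^ 2))
        ≤ α * x ^ κ * (α * x ^ κ * (3200 * h ^ 6 / l ^ 2)) := by gcongr
      _ = 3200 * α * (α * (x ^ (κ + κ) * h ^ 6) / l ^ 2) := by rw [rpow_add hx0]; ring
      _ = 3200 * α := by
        have h6 : κ + κ + -(1 + 2 * κ) / 6 * (6 : ℕ) = -1 := by push_cast; ring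
        rw [rpow_mul_rpow_pow hx0, h6, rpow_neg_one, hα]
        field_simp
  have hp : 0 ≤ 16 * h ^ 2 + h⁻¹ * exp (-(⌈α⌉₊ * h ^ 5 / (2 * l ^ 2))) +
    n * (3200 * h ^ 6 / l ^ 2) := by positivity
  have hU := sub_le_integral_U (m := 2 * ⌈α⌉₊) hl0 hp fun i hi =>
    measureReal_gMeasure_setOf_not_pruned_le hl hh0 hh hi
  have hceil := Nat.ceil_lt_add_one (zero_le_one.trans hα1)
  push_cast at hU
  linarith

theorem expected_pruned_lower_bound_general {ℓ α : ℕ → ℝ} {κ : ℝ} (hκ₀ : 0 ≤ κ)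
    (hκ : κ < 1 / 10) (hℓ : ∀ᶠ n in atTop, 1 ≤ ℓ n)
    (hξ : Tendsto (fun n => α n / ℓ n ^ 2) atTop atTop)
    (hα : ∀ᶠ n : ℕ in atTop, n ≤ α n * (α n / ℓ n ^ 2) ^ κ) :
    ∃ C > (0 : ℝ), ∀ᶠ n : ℕ in atTop, (n : ℝ) - C * α n ≤ ∫ ω, (U n ω : ℝ) ∂gMeasure n (ℓ n) := by
  have hh := (tendsto_rpow_neg_atTop (show 0 < (1 + 2 * κ) / 6 by linarith)).eventually_le_const
    (show (0 : ℝ) < 1 / 4 by norm_num)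
  have hexp := (tendsto_rpow_mul_exp_neg_mul_rpow_atTop (κ + (1 + 2 * κ) / 6)
    (show 0 < (1 - 10 * κ) / 6 by linarith) one_half_pos).eventually_le_const one_pos
  refine ⟨3221, by norm_num, ?_⟩
  filter_upwards [hℓ, hα, hξ.eventually_ge_atTop 1, hξ.eventually hh, hξ.eventually hexp]
    with n hℓn hαn hξn hhn hexpn
  have hℓ2 : ℓ n ^ 2 ≠ 0 := pow_ne_zero 2 (one_pos.trans_le hℓn).ne'
  exact sub_mul_le_integral_U hℓn (div_mul_cancel₀ _ hℓ2).symm hξn (by linarith) hαn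
    (by rwa [neg_div]) hexpn

theorem eventually_one_le_of_log_le {ℓ : ℕ → ℝ} (hℓ : ∀ n : ℕ, 1 < n → log n ≤ ℓ n) :
    ∀ᶠ n in atTop, 1 ≤ ℓ n := by
  filter_upwards [eventually_gt_atTop 1,
    (tendsto_log_atTop.comp tendsto_natCast_atTop_atTop).eventually_ge_atTop 1] with n hn hlog
  exact hlog.trans (hℓ n hn)

end Asymptotics

/-- Under the stated conditions on `⟨ℓ_n⟩` and `⟨α_n⟩`, there is `C > 0` such
that for all sufficiently large `n`, `E(U) ≥ n − C α_n`. -/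
theorem expected_pruned_lower_bound (cbar : ℝ) (hcbar : 0 < cbar) (ℓ : ℕ → ℝ) (hmono : Monotone ℓ)
    (hℓ : ∀ n : ℕ, 1 < n → Real.log n ≤ ℓ n ∧ ℓ n ≤ cbar * Real.sqrt (n / Real.log n))
    (α : ℕ → ℝ) (hα : ∀ n, 0 < α n)
    (hlittleo : (fun n => α n) =o[Filter.atTop] fun n => (n : ℝ))
    (hξ : Filter.Tendsto (fun n => α n / ℓ n ^ 2) Filter.atTop Filter.atTop)
    (h16 : ∀ᶠ n : ℕ in Filter.atTop,
      16 * (n : ℝ) / (Real.log (α n / ℓ n ^ 2)) ^ (3/2 : ℝ) < α n) :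
    ∃ C > (0 : ℝ), ∀ᶠ n : ℕ in Filter.atTop,
      (n : ℝ) - C * α n ≤ ∫ ω, (U n ω : ℝ) ∂(gMeasure n (ℓ n)) :=
  expected_pruned_lower_bound_general (κ := 1 / 20) (by norm_num) (by norm_num)
    (eventually_one_le_of_log_le fun n hn => (hℓ n hn).1) hξ
    (eventually_le_mul_rpow_of_div_log_rpow_lt (by norm_num) (by norm_num) hξ h16)
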